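/- If the pattern P can be self-assembled by a DTAS T with m = |C(P)| + 3 tile types, then the pattern Q can be self-assembled by a DTAS Θ using at most m_b = 1 black tile types, m_w = 5k − 3(w(P) + h(P)) + 14 white tile types, and m_g = 2k + 3 gray tile types. -/

import Mathlib

/-!
The simulating system `Θ` computes each supertile from its south-west corner. The corner tile at
inner position `(0, 0)` reads a south and a west glue of `T`, so it stands for one tile type `t` of
`T`, and it sends the color of `t` together with its east (north) output along the white bottom row
(left column). At the end of that row (column) the output is released to the next supertile, and
the color starts a counter that runs along the right column (top row): gray tiles count down to
zero, one white tile marks zero, and gray tiles follow. All glues in the black interior are blank,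
so one black tile type suffices. The gadget line of `Q` is a counter started by the seed at
`k`, and uses the same tile types. The outputs in the top row and in the right column of `P`
are replaced by blanks, since these supertiles border on the black part of the gadgets. The tile
types are listed in `IsQTile`, and `isQTile_cell` checks that they fit together into `Q`.

There are `2k + 3` gray tile types. The white ones are one corner tile type for each simulated tile
type, two tile types for each pair of a color and an east output, two for each pair of a color and
a north output, and the two zero marks. Two savings lead to the required number. First, a border
color of `P` occurs nowhere else in `P` (`patF_border_unique`): supertiles in the bottom row or the
left column have no corner tile, those in the bottom row have no white bottom row and those in the
left column no white left column. With `w + h - 1` border colors on these two sides, this saves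
`(w + h - 1) + 2 * w + 2 * h` tile types. Second, there are at most `2k + 4` pairs of a color and
an output, rather than `2(k + 3)`, because at most three tile types are left beyond one for each
color, and `P` contains subpatterns which then force coinciding outputs of `OR` tiles
(`card_outputs_le`). In total there are at most
`(k + 3 - (w + h - 1)) + 2 * (2 * k + 4 - w - h) + 2 = 5 * k + 14 - 3 * (w + h)` white tile types.
-/

/-- A colored Wang tile with a color and four glues (north, east, south, west). -/
structure Tile (C G : Type) where
  color : C
  north : G
  east : G
  south : G
  west : G
deriving DecidableEq

/-- A rectilinear tile assembly system: a finite set of tile types together with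
an L-shaped seed, given by its north glues (bottom arm) and east glues (left arm). -/
structure RTAS (C G : Type) where
  tiles : Finset (Tile C G)
  seedN : ℕ → G
  seedE : ℕ → G

/-- A tile assignment for the `M × N` rectangle spanned by the seed:
every tile belongs to the system, west/south glues match the east/north glues of the
west/south neighbours, and the seed glues on the boundary. -/
def IsAssignment {C G : Type} (T : RTAS C G) (M N : ℕ) (f : ℕ → ℕ → Tile C G) : Prop :=
  (∀ x < M, ∀ y < N, f x y ∈ T.tiles) ∧
  (∀ y < N, (f 0 y).west = T.seedE y) ∧
  (∀ x < M, (f x 0).south = T.seedN x) ∧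
  (∀ x, x + 1 < M → ∀ y < N, (f (x + 1) y).west = (f x y).east) ∧
  (∀ x < M, ∀ y, y + 1 < N → (f x (y + 1)).south = (f x y).north)

/-- `T` self-assembles the `M × N` pattern `P` if some tile assignment realizes `P`. -/
def SelfAssembles {C G : Type} (T : RTAS C G) (M N : ℕ) (P : ℕ → ℕ → C) : Prop :=
  ∃ f, IsAssignment T M N f ∧ ∀ x < M, ∀ y < N, (f x y).color = P x y

/-- A directed RTAS: distinct tile types differ in their south or west glue. -/
def DirectedTAS {C G : Type} (T : RTAS C G) : Prop :=
  ∀ t₁ ∈ T.tiles, ∀ t₂ ∈ T.tiles, t₁ ≠ t₂ → t₁.south ≠ t₂.south ∨ t₁.west ≠ t₂.west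

/-- The set of colors occurring in the `M × N` pattern `P`. -/
def colorsOf {C : Type} [DecidableEq C] (M N : ℕ) (P : ℕ → ℕ → C) : Finset C :=
  (Finset.range M ×ˢ Finset.range N).image fun q => P q.1 q.2

/-- The named colors used in the subpatterns of the pattern `P_F` of the paper.
`uniq n` are the "unique" filler colors. -/
inductive PColor where
  | orC | plus | minus
  | Z1 | Z2 | Z3 | Z4
  | aC | bW | bD | cW | cD | dC
  | arrW (w : Fin 2)
  | arrD (w : Fin 2)
  | upW (s : Fin 2)
  | upD (s : Fin 2)
  | gate (i : Fin 4)
  | X (i : Fin 8)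
  | Y (i : Fin 8)
  | varW (v : ℕ)
  | negW (v : ℕ)
  | varAux (v : ℕ)
  | varMod (v : ℕ)
  | varModd (v : ℕ)
  | uniq (n : ℕ)
deriving DecidableEq

/-- The `16 × 2` subpattern `p`: eight `2 × 2` blocks, block `i` having colors
`Xᵢ` (bottom-left), `OR` (bottom-right, top-left) and `Yᵢ` (top-right). -/
def pPat : ℕ → ℕ → PColor := fun x y =>
  if y = 0 then
    if x % 2 = 0 then PColor.X ⟨x / 2 % 8, Nat.mod_lt _ (by norm_num)⟩ else PColor.orC
  else
    if x % 2 = 0 then PColor.orC else PColor.Y ⟨x / 2 % 8, Nat.mod_lt _ (by norm_num)⟩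

/-- The `4 × 4` subpatterns `q₁, …, q₄` (index `idx = 0, …, 3`), with west input
`w = idx / 2` and south input `s = idx % 2` feeding an `OR`-colored position. -/
def qPat (idx : Fin 4) : ℕ → ℕ → PColor := fun x y =>
  let wv : Fin 2 := ⟨idx.val / 2, by have := idx.isLt; omega⟩
  let sv : Fin 2 := ⟨idx.val % 2, Nat.mod_lt _ (by norm_num)⟩
  match x, y with
  | 0, 0 => PColor.Z1
  | 1, 0 => PColor.Z2
  | 2, 0 => PColor.upD sv
  | 3, 0 => PColor.bD
  | 0, 1 => PColor.Z3
  | 1, 1 => PColor.aC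
  | 2, 1 => PColor.upW sv
  | 3, 1 => PColor.bW
  | 0, 2 => PColor.arrD wv
  | 1, 2 => PColor.arrW wv
  | 2, 2 => PColor.orC
  | 3, 2 => if idx.val = 0 then PColor.minus else PColor.plus
  | 0, 3 => PColor.cD
  | 1, 3 => PColor.cW
  | 2, 3 => PColor.gate idx
  | _, _ => PColor.dC

/-- The `6 × 3` subpattern `q₅`: bottom row `a ↑₀ ↑₁ ↑₀ ↑₁ b`, middle row
`→₀ OR OR OR OR +`, top row `c A B C D d`. -/
def q5Pat : ℕ → ℕ → PColor := fun x y =>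
  match y, x with
  | 0, 0 => PColor.aC
  | 0, 1 => PColor.upW 0
  | 0, 2 => PColor.upW 1
  | 0, 3 => PColor.upW 0
  | 0, 4 => PColor.upW 1
  | 0, _ => PColor.bW
  | 1, 0 => PColor.arrW 0
  | 1, 5 => PColor.plus
  | 1, _ => PColor.orC
  | 2, 0 => PColor.cW
  | 2, 1 => PColor.gate 0
  | 2, 2 => PColor.gate 1
  | 2, 3 => PColor.gate 2
  | 2, 4 => PColor.gate 3
  | _, _ => PColor.dC

/-- A literal: a variable index together with its sign (`true` = positive). -/
abbrev Lit := ℕ × Bool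

/-- A clause with three literals. -/
abbrev Clause3 := Lit × Lit × Lit

/-- A boolean formula in 3-CNF over the variables `0, …, numVars - 1`. -/
structure CNF3 where
  numVars : ℕ
  clauses : List Clause3
  wf : ∀ cl ∈ clauses, cl.1.1 < numVars ∧ cl.2.1.1 < numVars ∧ cl.2.2.1 < numVars

/-- Value of a literal under a variable assignment. -/
def litVal (f : ℕ → Bool) (l : Lit) : Bool := if l.2 then f l.1 else ! f l.1

/-- A 3-CNF formula is satisfiable if some assignment makes every clause true. -/
def CNF3.Satisfiable (F : CNF3) : Prop :=
  ∃ f : ℕ → Bool, ∀ cl ∈ F.clauses,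
    (litVal f cl.1 || litVal f cl.2.1 || litVal f cl.2.2) = true

/-- The `2 × 2` subpattern `r₁(v)`. -/
def r1Pat (v : ℕ) : ℕ → ℕ → PColor := fun x y =>
  match x, y with
  | 0, 0 => PColor.Z4
  | 1, 0 => PColor.varW v
  | 0, 1 => PColor.varAux v
  | _, _ => PColor.varMod v

/-- The `2 × 2` subpattern `r₂(v)`. -/
def r2Pat (v : ℕ) : ℕ → ℕ → PColor := fun x y =>
  match x, y with
  | 0, 0 => PColor.Z4
  | 1, 0 => PColor.negW v
  | 0, 1 => PColor.varAux v
  | _, _ => PColor.varModd v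

/-- The `4 × 2` subpattern `r₃(v)`: bottom row `a v ¬v b`, top row `→₀ OR OR +`. -/
def r3Pat (v : ℕ) : ℕ → ℕ → PColor := fun x y =>
  match y, x with
  | 0, 0 => PColor.aC
  | 0, 1 => PColor.varW v
  | 0, 2 => PColor.negW v
  | 0, _ => PColor.bW
  | 1, 0 => PColor.arrW 0
  | 1, 3 => PColor.plus
  | _, _ => PColor.orC

/-- The color of a literal. -/
def litColor (l : Lit) : PColor := if l.2 then PColor.varW l.1 else PColor.negW l.1

/-- The `5 × 2` subpattern `s(C)` for a clause `C = (c₁ ∨ c₂ ∨ c₃)`: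
bottom row `a c₁ c₂ c₃ b`, top row `→₀ OR OR OR +`. -/
def sPat (cl : Clause3) : ℕ → ℕ → PColor := fun x y =>
  match y, x with
  | 0, 0 => PColor.aC
  | 0, 1 => litColor cl.1
  | 0, 2 => litColor cl.2.1
  | 0, 3 => litColor cl.2.2
  | 0, _ => PColor.bW
  | 1, 0 => PColor.arrW 0
  | 1, 4 => PColor.plus
  | _, _ => PColor.orC

/-- A rectangular block: width, height and contents. -/
abbrev PBlock := ℕ × ℕ × (ℕ → ℕ → PColor)

/-- The list of subpatterns of `P_F`: `p`, `q₁, …, q₅`, then `r₁(v), r₂(v), r₃(v)`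
for every variable `v`, then `s(C)` for every clause `C`. -/
def blocksOf (F : CNF3) : List PBlock :=
  [(16, 2, pPat), (4, 4, qPat 0), (4, 4, qPat 1), (4, 4, qPat 2), (4, 4, qPat 3),
    (6, 3, q5Pat)]
    ++ (List.range F.numVars).flatMap
        (fun v => [(2, 2, r1Pat v), (2, 2, r2Pat v), (4, 2, r3Pat v)])
    ++ F.clauses.map (fun cl => (5, 2, sPat cl))

/-- Place the blocks side by side (starting at column `x0`, occupying rows `1, …, h`),
with one column of unique colors before each block and after the last one; all the
remaining positions carry unique colors (`uniq` of the position code). -/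
def place : List PBlock → ℕ → ℕ → ℕ → PColor
  | [], _, x, y => PColor.uniq (Nat.pair x y)
  | b :: bs, x0, x, y =>
      if x0 ≤ x ∧ x < x0 + b.1 ∧ 1 ≤ y ∧ y < 1 + b.2.1 then
        b.2.2 (x - x0) (y - 1)
      else if x < x0 + b.1 + 1 then PColor.uniq (Nat.pair x y)
      else place bs (x0 + b.1 + 1) x y

/-- The pattern `P_F` of the paper, of height `6` and width `45 + 11·|V| + 6·ℓ`. -/
def patF (F : CNF3) : ℕ → ℕ → PColor := fun x y => place (blocksOf F) 1 x y

/-- The width of the pattern `P_F`. -/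
def widthF (F : CNF3) : ℕ := 45 + 11 * F.numVars + 6 * F.clauses.length

/-- The three colors black, white, gray. -/
inductive BWG where
  | black | white | gray
deriving DecidableEq

/-- The number of tile types of a given color in a tile assembly system. -/
def countColor {C G : Type} [DecidableEq C] (T : RTAS C G) (c : C) : ℕ :=
  (T.tiles.filter (fun t => t.color = c)).card

/-- The `ℓ × ℓ` supertile portraying the color `c ∈ [k]` (with `ℓ = 5k + 8`):
white bottom row and left column; gray top row and right column except for one
white position at index `c + 1` of each (the color counters); black interior. -/
def superPat (ℓ c : ℕ) : ℕ → ℕ → BWG := fun x y =>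
  if y = 0 then BWG.white
  else if x = 0 then BWG.white
  else if y = ℓ - 1 then (if x = c + 1 then BWG.white else BWG.gray)
  else if x = ℓ - 1 then (if y = c + 1 then BWG.white else BWG.gray)
  else BWG.black

/-- The black/white/gray pattern `Q` built from the `w × h` pattern `P` with colors
in `[k]`: each position `(x, y)` of `P` is replaced by the `ℓ × ℓ` supertile
portraying `P x y` (supertiles in the bottom row/left column of `P` are
incomplete, lacking their white bottom row/left column), and three gadget rows
and three gadget columns are appended at the top and at the right. -/
def QPat (k w h : ℕ) (P : ℕ → ℕ → ℕ) : ℕ → ℕ → BWG := fun X Y =>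
  let ℓ := 5 * k + 8
  if X + 1 < ℓ * w ∧ Y + 1 < ℓ * h then
    superPat ℓ (P ((X + 1) / ℓ) ((Y + 1) / ℓ)) ((X + 1) % ℓ) ((Y + 1) % ℓ)
  else if X + 1 < ℓ * w then
    -- the three gadget rows
    if Y = ℓ * h then (if X = k then BWG.white else BWG.gray)
    else (if (X + 1) % ℓ = ℓ - 1 then BWG.gray else BWG.black)
  else if Y + 1 < ℓ * h then
    -- the three gadget columns
    if X = ℓ * w then (if Y = k then BWG.white else BWG.gray)
    else (if (Y + 1) % ℓ = ℓ - 1 then BWG.gray else BWG.black)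
  else
    -- the top-right 3 × 3 corner
    if X = ℓ * w ∨ Y = ℓ * h then BWG.gray else BWG.black

/-- Width of the pattern `Q`. -/
def QW (k w : ℕ) : ℕ := (5 * k + 8) * w + 2

/-- Height of the pattern `Q`. -/
def QH (k h : ℕ) : ℕ := (5 * k + 8) * h + 2

/-- `(P, m) ∈ ℐ` (with `m = k + 3`): `P` is, up to an identification `ρ` of its
colors with `[k] = {1, …, k}`, the pattern `P_F` of a 3-CNF formula `F`. -/
def InI (k w h : ℕ) (P : ℕ → ℕ → ℕ) : Prop :=
  ∃ (F : CNF3) (ρ : PColor → ℕ),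
    w = widthF F ∧ h = 6 ∧
    Set.BijOn ρ (↑(colorsOf (widthF F) 6 (patF F))) (Set.Icc 1 k) ∧
    ∀ x < w, ∀ y < h, P x y = ρ (patF F x y)

/-- The tile assignment of the supertile at `(x, y)` of the supertile grid,
as a partial function on inner coordinates: inner position `(i, j)` corresponds
to the global position `(x·ℓ + i - 1, y·ℓ + j - 1)`; positions with `i = 0`
(resp. `j = 0`) exist only if `x ≥ 1` (resp. `y ≥ 1`). -/
def superOpt {G : Type} (ℓ : ℕ) (f : ℕ → ℕ → Tile BWG G) (x y : ℕ) :
    ℕ → ℕ → Option (Tile BWG G) := fun i j =>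
  if i < ℓ ∧ j < ℓ ∧ (1 ≤ x ∨ 1 ≤ i) ∧ (1 ≤ y ∨ 1 ≤ j) then
    some (f (x * ℓ + i - 1) (y * ℓ + j - 1))
  else none

/-- `s(N)`: the north output of a supertile, i.e. the north glue of its tile in
position `C₂` (inner position `(0, ℓ - 1)`); defined for `x ≥ 1`. -/
def stN {G : Type} (ℓ : ℕ) (f : ℕ → ℕ → Tile BWG G) (x y : ℕ) : G :=
  (f (x * ℓ - 1) (y * ℓ + ℓ - 2)).north

/-- `s(E)`: the east output of a supertile, i.e. the east glue of its tile in
position `C₁` (inner position `(ℓ - 1, 0)`); defined for `y ≥ 1`. -/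
def stE {G : Type} (ℓ : ℕ) (f : ℕ → ℕ → Tile BWG G) (x y : ℕ) : G :=
  (f (x * ℓ + ℓ - 2) (y * ℓ - 1)).east

/-- `s(S)`: the south input of a supertile, i.e. the south glue of its tile in
position `A` (inner position `(0, 0)`); defined for `x, y ≥ 1`. -/
def stS {G : Type} (ℓ : ℕ) (f : ℕ → ℕ → Tile BWG G) (x y : ℕ) : G :=
  (f (x * ℓ - 1) (y * ℓ - 1)).south

/-- `s(W)`: the west input of a supertile, i.e. the west glue of its tile in
position `A` (inner position `(0, 0)`); defined for `x, y ≥ 1`. -/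
def stW {G : Type} (ℓ : ℕ) (f : ℕ → ℕ → Tile BWG G) (x y : ℕ) : G :=
  (f (x * ℓ - 1) (y * ℓ - 1)).west

/-! ### Glues and cells of the simulating system -/

/-- Glues of the simulating system; the same type serves horizontal and vertical edges. -/
inductive QGlue (G : Type) where
  /-- the glue on all four sides of the black tile -/
  | blank
  /-- a color counter that has finished -/
  | done
  /-- a color counter with `n` gray tiles still to come -/
  | cnt (n : ℕ)
  /-- a glue of the simulated system, passed from one supertile to the next -/
  | raw (g : G)
  /-- the color of the portrayed tile, with the glue that its supertile has to output -/
  | info (c : ℕ) (g : Option G)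

/-- An output of a supertile; `none` marks an output on the border of the supertile grid,
which meets the black gadget line and has to be blank. -/
def QGlue.ofOpt {G : Type} : Option G → QGlue G
  | none => .blank
  | some g => .raw g

/-- The glue on the west edge of inner position `(i, j)` of the supertile at `(x, y)`, where
`c x y` is the portrayed color and `o x y` the east output of that supertile. The gadget
columns have `x = w` and the gadget rows `y = h`. Vertical edges use the same function with
the two coordinates exchanged. -/
def edgeGlue {G : Type} (l k w h : ℕ) (c : ℕ → ℕ → ℕ) (o : ℕ → ℕ → Option G)
    (x i y j : ℕ) : QGlue G :=
  if y < h then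
    if j = 0 then
      if i = 0 then .ofOpt (o (x - 1) y)
      else if x < w then .info (c x y) (o x y) else .blank
    else if j = l - 1 then
      if x < w ∧ 1 ≤ i ∧ i ≤ c x y + 1 then .cnt (c x y + 1 - i) else .done
    else .blank
  else if j = 1 then
    if x = 0 ∧ i ≤ k + 1 then .cnt (k + 1 - i) else .done
  else .blank

/-- The pattern `Q` in supertile coordinates: the color at inner position `(i, j)` of the
supertile at `(x, y)`, with `x = w` for the gadget columns and `y = h` for the gadget rows. -/
def cellColor (l k w h : ℕ) (c : ℕ → ℕ → ℕ) (x i y j : ℕ) : BWG :=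
  if x < w ∧ y < h then superPat l (c x y) i j
  else if x < w then
    if j = 1 then (if x = 0 ∧ i = k + 1 then .white else .gray)
    else (if i = l - 1 then .gray else .black)
  else if y < h then
    if i = 1 then (if y = 0 ∧ j = k + 1 then .white else .gray)
    else (if j = l - 1 then .gray else .black)
  else if i = 1 ∨ j = 1 then .gray else .black

/-- The tile types of the simulating system. `A` lists the simulated tile types with their
color, outputs (north, east) and inputs (south, west); `S₁` and `S₂` list the pairs of a color
and an east (north) output which are carried along bottom rows (left columns). -/
inductive IsQTile {G : Type} (k : ℕ) (A : ℕ → Option G → Option G → G → G → Prop)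
    (S₁ S₂ : ℕ → Option G → Prop) : Tile BWG (QGlue G) → Prop
  | corner {c n e s w} : A c n e s w →
      IsQTile k A S₁ S₂ ⟨.white, .info c n, .info c e, .raw s, .raw w⟩
  | bottom {c e} : S₁ c e → IsQTile k A S₁ S₂ ⟨.white, .blank, .info c e, .blank, .info c e⟩
  | bottomEnd {c e} : S₁ c e → IsQTile k A S₁ S₂ ⟨.white, .cnt c, .ofOpt e, .done, .info c e⟩
  | left {c n} : S₂ c n → IsQTile k A S₁ S₂ ⟨.white, .info c n, .blank, .info c n, .blank⟩
  | leftEnd {c n} : S₂ c n → IsQTile k A S₁ S₂ ⟨.white, .ofOpt n, .cnt c, .info c n, .done⟩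
  | hZero : IsQTile k A S₁ S₂ ⟨.white, .blank, .done, .blank, .cnt 0⟩
  | vZero : IsQTile k A S₁ S₂ ⟨.white, .done, .blank, .cnt 0, .blank⟩
  | hCount {m} : m < k → IsQTile k A S₁ S₂ ⟨.gray, .blank, .cnt m, .blank, .cnt (m + 1)⟩
  | vCount {m} : m < k → IsQTile k A S₁ S₂ ⟨.gray, .cnt m, .blank, .cnt (m + 1), .blank⟩
  | hDone : IsQTile k A S₁ S₂ ⟨.gray, .blank, .done, .blank, .done⟩
  | vDone : IsQTile k A S₁ S₂ ⟨.gray, .done, .blank, .done, .blank⟩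
  | bothDone : IsQTile k A S₁ S₂ ⟨.gray, .done, .done, .done, .done⟩
  | black : IsQTile k A S₁ S₂ ⟨.black, .blank, .blank, .blank, .blank⟩

/-- Distinct tile types differ in an input as soon as the simulated tile types do. -/
theorem IsQTile.directed {G : Type} {k : ℕ} {A : ℕ → Option G → Option G → G → G → Prop}
    {S₁ S₂ : ℕ → Option G → Prop}
    (hA : ∀ c n e c' n' e' s w, A c n e s w → A c' n' e' s w → c = c' ∧ n = n' ∧ e = e')
    {t t' : Tile BWG (QGlue G)} (ht : IsQTile k A S₁ S₂ t) (ht' : IsQTile k A S₁ S₂ t')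
    (hs : t.south = t'.south) (hw : t.west = t'.west) : t = t' := by
  cases ht <;> cases ht' <;> simp_all
  grind

/-- Position `(i, j)` of the supertile at `(x, y)`, with the glues on its four edges, is one of the
tile types. The primed coordinates are those of the neighbors to the east and to the north. -/
theorem isQTile_cell {G : Type} (k w h : ℕ) (hw : 0 < w) (hh : 0 < h)
    {A : ℕ → Option G → Option G → G → G → Prop} {S₁ S₂ : ℕ → Option G → Prop}
    (c : ℕ → ℕ → ℕ) (oN oE : ℕ → ℕ → Option G)
    (hc : ∀ x < w, ∀ y < h, c x y ≤ k)
    (hA : ∀ x < w, ∀ y < h, 1 ≤ x → 1 ≤ y → ∃ s t, oN x (y - 1) = some s ∧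
      oE (x - 1) y = some t ∧ A (c x y) (oN x y) (oE x y) s t)
    (hS₁ : ∀ x < w, ∀ y < h, 1 ≤ y → S₁ (c x y) (oE x y))
    (hS₂ : ∀ x < w, ∀ y < h, 1 ≤ x → S₂ (c x y) (oN x y))
    (hE : ∀ y < h, oE (w - 1) y = none) (hN : ∀ x < w, oN x (h - 1) = none)
    (x i y j x' i' y' j' : ℕ)
    (hx : (x < w ∧ i < 5 * k + 8) ∨ (x = w ∧ i ≤ 2))
    (hy : (y < h ∧ j < 5 * k + 8) ∨ (y = h ∧ j ≤ 2))
    (hx0 : 1 ≤ x ∨ 1 ≤ i) (hy0 : 1 ≤ y ∨ 1 ≤ j)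
    (hx' : (i ≠ 5 * k + 7 ∧ x' = x ∧ i' = i + 1) ∨ (i = 5 * k + 7 ∧ x' = x + 1 ∧ i' = 0))
    (hy' : (j ≠ 5 * k + 7 ∧ y' = y ∧ j' = j + 1) ∨ (j = 5 * k + 7 ∧ y' = y + 1 ∧ j' = 0)) :
    IsQTile k A S₁ S₂
      ⟨cellColor (5 * k + 8) k w h c x i y j,
        edgeGlue (5 * k + 8) k h w (fun y x => c x y) (fun y x => oN x y) y' j' x i,
        edgeGlue (5 * k + 8) k w h c oE x' i' y j,
        edgeGlue (5 * k + 8) k h w (fun y x => c x y) (fun y x => oN x y) y j x i,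
        edgeGlue (5 * k + 8) k w h c oE x i y j⟩ := by
  rcases hx with ⟨hx, hi⟩ | ⟨rfl, hi⟩ <;> rcases hy with ⟨hy, hj⟩ | ⟨rfl, hj⟩
  · have hck := hc x hx y hy
    rcases hx' with ⟨hi1, rfl, rfl⟩ | ⟨rfl, rfl, rfl⟩ <;>
      rcases hy' with ⟨hj1, rfl, rfl⟩ | ⟨rfl, rfl, rfl⟩
    · rcases Nat.eq_zero_or_pos i with rfl | hi0 <;> rcases Nat.eq_zero_or_pos j with rfl | hj0
      · obtain ⟨s, t, hs, ht, hA⟩ := hA x' hx y' hy (by omega) (by omega)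
        simpa [cellColor, edgeGlue, superPat, *, QGlue.ofOpt] using IsQTile.corner hA
      · have h1 : j ≠ 0 := by omega
        simpa [cellColor, edgeGlue, superPat, *] using
          IsQTile.left (hS₂ x' hx y' hy (by omega))
      · have h1 : i ≠ 0 := by omega
        simpa [cellColor, edgeGlue, superPat, *] using
          IsQTile.bottom (hS₁ x' hx y' hy (by omega))
      · have h1 : i ≠ 0 := by omega
        have h2 : j ≠ 0 := by omega
        simpa [cellColor, edgeGlue, superPat, *] using IsQTile.black
    · rcases Nat.eq_zero_or_pos i with rfl | hi0
      · simpa [cellColor, edgeGlue, superPat, *] using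
          IsQTile.leftEnd (hS₂ x' hx y hy (by omega))
      · have h1 : i ≠ 0 := by omega
        rcases lt_trichotomy i (c x' y + 1) with h2 | h2 | h2
        · obtain ⟨m, hm⟩ : ∃ m, c x' y = i + m := ⟨c x' y - i, by omega⟩
          have h3 : i + m + 1 - i = m + 1 := by omega
          have h4 : i ≠ i + m + 1 := by omega
          have h5 : i ≤ i + m + 1 := by omega
          have h6 : 1 ≤ i := hi0
          have h7 : m < k := by omega
          simpa [cellColor, edgeGlue, superPat, *] using IsQTile.hCount h7
        · have h3 : c x' y ≠ 5 * k + 6 := by omega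
          subst h2
          simpa [cellColor, edgeGlue, superPat, *] using IsQTile.hZero
        · have h3 : i ≠ c x' y + 1 := by omega
          have h4 : ¬ i ≤ c x' y + 1 := by omega
          have h5 : ¬ i ≤ c x' y := by omega
          simpa [cellColor, edgeGlue, superPat, *] using IsQTile.hDone
    · rcases Nat.eq_zero_or_pos j with rfl | hj0
      · simpa [cellColor, edgeGlue, superPat, *] using
          IsQTile.bottomEnd (hS₁ x hx y' hy (by omega))
      · have h1 : j ≠ 0 := by omega
        rcases lt_trichotomy j (c x y' + 1) with h2 | h2 | h2
        · obtain ⟨m, hm⟩ : ∃ m, c x y' = j + m := ⟨c x y' - j, by omega⟩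
          have h3 : j + m + 1 - j = m + 1 := by omega
          have h4 : j ≠ j + m + 1 := by omega
          have h5 : j ≤ j + m + 1 := by omega
          have h6 : 1 ≤ j := hj0
          have h7 : m < k := by omega
          simpa [cellColor, edgeGlue, superPat, *] using IsQTile.vCount h7
        · have h3 : c x y' ≠ 5 * k + 6 := by omega
          subst h2
          simpa [cellColor, edgeGlue, superPat, *] using IsQTile.vZero
        · have h3 : j ≠ c x y' + 1 := by omega
          have h4 : ¬ j ≤ c x y' + 1 := by omega
          have h5 : ¬ j ≤ c x y' := by omega
          simpa [cellColor, edgeGlue, superPat, *] using IsQTile.vDone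
    · have h1 : ¬ 5 * k + 7 ≤ c x y + 1 := by omega
      have h2 : ¬ 5 * k + 7 ≤ c x y := by omega
      have h3 : 5 * k + 7 ≠ c x y + 1 := by omega
      simpa [cellColor, edgeGlue, superPat, *] using IsQTile.bothDone
  · -- gadget rows
    obtain ⟨rfl, rfl⟩ : y' = y ∧ j' = j + 1 := by omega
    rcases hx' with ⟨hi1, rfl, rfl⟩ | ⟨rfl, rfl, rfl⟩
    · have h0 : i + 1 ≠ 0 := by omega
      by_cases h1 : j = 1
      · subst h1
        by_cases h2 : x' = 0
        · subst h2
          have h1 : i ≠ 0 := by omega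
          rcases lt_trichotomy i (k + 1) with h2 | h2 | h2
          · obtain ⟨m, rfl⟩ : ∃ m, k = i + m := ⟨k - i, by omega⟩
            have h3 : i + m + 1 - i = m + 1 := by omega
            have h4 : i ≠ i + m + 1 := by omega
            have h5 : i ≤ i + m + 1 := by omega
            have h7 : m < i + m := by omega
            simpa [cellColor, edgeGlue, *] using IsQTile.hCount h7
          · subst h2
            have h3 : k ≠ 5 * k + 6 := by omega
            simpa [cellColor, edgeGlue, *] using IsQTile.hZero
          · have h3 : i ≠ k + 1 := by omega
            have h4 : ¬ i ≤ k + 1 := by omega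
            have h5 : ¬ i ≤ k := by omega
            simpa [cellColor, edgeGlue, *] using IsQTile.hDone
        · simpa [cellColor, edgeGlue, *] using IsQTile.hDone
      · rcases Nat.eq_zero_or_pos j with rfl | hj0
        · simpa [cellColor, edgeGlue, *, QGlue.ofOpt] using IsQTile.black
        · have h2 : j ≠ 0 := by omega
          simpa [cellColor, edgeGlue, *] using IsQTile.black
    · by_cases h1 : j = 1
      · have h2 : 5 * k + 6 ≠ k := by omega
        have h3 : ¬ 5 * k + 6 ≤ k := by omega
        subst h1
        simpa [cellColor, edgeGlue, *] using IsQTile.bothDone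
      · simpa [cellColor, edgeGlue, *] using IsQTile.vDone
  · -- gadget columns
    obtain ⟨rfl, rfl⟩ : x' = x ∧ i' = i + 1 := by omega
    rcases hy' with ⟨hj1, rfl, rfl⟩ | ⟨rfl, rfl, rfl⟩
    · have h0 : j + 1 ≠ 0 := by omega
      by_cases h1 : i = 1
      · subst h1
        by_cases h2 : y' = 0
        · subst h2
          have h1 : j ≠ 0 := by omega
          rcases lt_trichotomy j (k + 1) with h2 | h2 | h2
          · obtain ⟨m, rfl⟩ : ∃ m, k = j + m := ⟨k - j, by omega⟩
            have h3 : j + m + 1 - j = m + 1 := by omega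
            have h4 : j ≠ j + m + 1 := by omega
            have h5 : j ≤ j + m + 1 := by omega
            have h7 : m < j + m := by omega
            simpa [cellColor, edgeGlue, *] using IsQTile.vCount h7
          · subst h2
            have h3 : k ≠ 5 * k + 6 := by omega
            simpa [cellColor, edgeGlue, *] using IsQTile.vZero
          · have h3 : j ≠ k + 1 := by omega
            have h4 : ¬ j ≤ k + 1 := by omega
            have h5 : ¬ j ≤ k := by omega
            simpa [cellColor, edgeGlue, *] using IsQTile.vDone
        · simpa [cellColor, edgeGlue, *] using IsQTile.vDone
      · rcases Nat.eq_zero_or_pos i with rfl | hi0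
        · simpa [cellColor, edgeGlue, *, QGlue.ofOpt] using IsQTile.black
        · have h2 : i ≠ 0 := by omega
          simpa [cellColor, edgeGlue, *] using IsQTile.black
    · by_cases h1 : i = 1
      · have h2 : 5 * k + 6 ≠ k := by omega
        have h3 : ¬ 5 * k + 6 ≤ k := by omega
        subst h1
        simpa [cellColor, edgeGlue, *] using IsQTile.bothDone
      · simpa [cellColor, edgeGlue, *] using IsQTile.hDone
  · obtain ⟨rfl, rfl⟩ : x' = x ∧ i' = i + 1 := by omega
    obtain ⟨rfl, rfl⟩ : y' = y ∧ j' = j + 1 := by omega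
    by_cases h1 : i = 1 <;> by_cases h2 : j = 1
    · simpa [cellColor, edgeGlue, hw.ne', hh.ne', *] using IsQTile.bothDone
    · simpa [cellColor, edgeGlue, hw.ne', hh.ne', *] using IsQTile.vDone
    · simpa [cellColor, edgeGlue, hw.ne', hh.ne', *] using IsQTile.hDone
    · simpa [cellColor, edgeGlue, hw.ne', hh.ne', *] using IsQTile.black

/-! ### The assembled pattern -/

theorem qPat_eq_cellColor {k w h : ℕ} {P : ℕ → ℕ → ℕ} {X Y x i y j : ℕ}
    (hX : X + 1 = (5 * k + 8) * x + i) (hY : Y + 1 = (5 * k + 8) * y + j)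
    (hi : i < 5 * k + 8) (hj : j < 5 * k + 8)
    (hx : x < w ∨ (x = w ∧ i ≤ 2)) (hy : y < h ∨ (y = h ∧ j ≤ 2)) :
    QPat k w h P X Y = cellColor (5 * k + 8) k w h P x i y j := by
  have hx1 : (X + 1) / (5 * k + 8) = x := by
    rw [hX, Nat.mul_add_div (by omega), Nat.div_eq_of_lt hi, add_zero]
  have hy1 : (Y + 1) / (5 * k + 8) = y := by
    rw [hY, Nat.mul_add_div (by omega), Nat.div_eq_of_lt hj, add_zero]
  have hx2 : (X + 1) % (5 * k + 8) = i := by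
    rw [hX, Nat.mul_add_mod, Nat.mod_eq_of_lt hi]
  have hy2 : (Y + 1) % (5 * k + 8) = j := by
    rw [hY, Nat.mul_add_mod, Nat.mod_eq_of_lt hj]
  have ex : X + 1 < (5 * k + 8) * w ↔ x < w := by
    rw [← hx1, Nat.div_lt_iff_lt_mul (by omega), mul_comm]
  have ey : Y + 1 < (5 * k + 8) * h ↔ y < h := by
    rw [← hy1, Nat.div_lt_iff_lt_mul (by omega), mul_comm]
  have ek : X = k ↔ x = 0 ∧ i = k + 1 := by
    rcases x with _ | x
    · omega
    · have := Nat.le_mul_of_pos_right (5 * k + 8) (show 0 < x + 1 by omega)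
      omega
  have ek' : Y = k ↔ y = 0 ∧ j = k + 1 := by
    rcases y with _ | y
    · omega
    · have := Nat.le_mul_of_pos_right (5 * k + 8) (show 0 < y + 1 by omega)
      omega
  have e1 : ¬ x < w → (X = (5 * k + 8) * w ↔ i = 1) := by
    intro h0
    obtain rfl : x = w := by omega
    omega
  have e2 : ¬ y < h → (Y = (5 * k + 8) * h ↔ j = 1) := by
    intro h0
    obtain rfl : y = h := by omega
    omega
  simp only [QPat, cellColor, hx1, hy1, hx2, hy2, ex, ey]
  by_cases h1 : x < w <;> by_cases h2 : y < h <;> simp [*]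

/-- The glue on the west edge of position `(X, Y)` of `Q`. -/
def westGlue {G : Type} (k w h : ℕ) (c : ℕ → ℕ → ℕ) (oE : ℕ → ℕ → Option G) (X Y : ℕ) :
    QGlue G :=
  edgeGlue (5 * k + 8) k w h c oE ((X + 1) / (5 * k + 8)) ((X + 1) % (5 * k + 8))
    ((Y + 1) / (5 * k + 8)) ((Y + 1) % (5 * k + 8))

/-- The glue on the south edge of position `(X, Y)` of `Q`. -/
def southGlue {G : Type} (k w h : ℕ) (c : ℕ → ℕ → ℕ) (oN : ℕ → ℕ → Option G) (X Y : ℕ) :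
    QGlue G :=
  edgeGlue (5 * k + 8) k h w (fun y x => c x y) (fun y x => oN x y)
    ((Y + 1) / (5 * k + 8)) ((Y + 1) % (5 * k + 8))
    ((X + 1) / (5 * k + 8)) ((X + 1) % (5 * k + 8))

/-- Division with remainder of a position coordinate and of its successor. -/
theorem coord_cases {k w X : ℕ} (hX : X < QW k w) :
    ∃ x i x' i', X + 1 = (5 * k + 8) * x + i ∧ i < 5 * k + 8 ∧
      (X + 1) / (5 * k + 8) = x ∧ (X + 1) % (5 * k + 8) = i ∧
      (X + 1 + 1) / (5 * k + 8) = x' ∧ (X + 1 + 1) % (5 * k + 8) = i' ∧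
      ((x < w ∧ i < 5 * k + 8) ∨ (x = w ∧ i ≤ 2)) ∧ (1 ≤ x ∨ 1 ≤ i) ∧
      ((i ≠ 5 * k + 7 ∧ x' = x ∧ i' = i + 1) ∨ (i = 5 * k + 7 ∧ x' = x + 1 ∧ i' = 0)) := by
  have hdm := Nat.div_add_mod (X + 1) (5 * k + 8)
  have hlt := Nat.mod_lt (X + 1) (show 5 * k + 8 > 0 by omega)
  refine ⟨_, _, _, _, hdm.symm, hlt, rfl, rfl, rfl, rfl, ?_, ?_, ?_⟩
  · generalize (X + 1) / (5 * k + 8) = x at *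
    generalize (X + 1) % (5 * k + 8) = i at *
    unfold QW at hX
    rcases lt_trichotomy x w with h | rfl | h
    · exact .inl ⟨h, hlt⟩
    · exact .inr ⟨rfl, by omega⟩
    · have := Nat.mul_le_mul_left (5 * k + 8) (show w + 1 ≤ x from h)
      rw [Nat.mul_add] at this
      omega
  · by_contra! h
    have h1 : (X + 1) / (5 * k + 8) = 0 := Nat.lt_one_iff.1 h.1
    rw [h1, Nat.mul_zero] at hdm
    omega
  · generalize hx : (X + 1) / (5 * k + 8) = x at *
    generalize hi : (X + 1) % (5 * k + 8) = i at *
    by_cases h : i = 5 * k + 7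
    · have : X + 1 + 1 = (5 * k + 8) * (x + 1) := by rw [Nat.mul_add]; omega
      rw [this]
      exact .inr ⟨h, by simp, by simp⟩
    · have : X + 1 + 1 = (5 * k + 8) * x + (i + 1) := by omega
      rw [this, Nat.mul_add_div (by omega), Nat.mul_add_mod,
        Nat.div_eq_of_lt (by omega), Nat.mod_eq_of_lt (by omega)]
      exact .inl ⟨h, by simp, rfl⟩

/-- A system with all the tile types of `IsQTile` assembles `Q`, if `A`, `S₁` and `S₂` contain the
data of the supertiles and the outputs `oN` and `oE` are empty in the top row and in the right
column. The seed carries the glues of the west and south edges of `Q`. -/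
theorem selfAssembles_of_isQTile {G : Type} (k w h : ℕ) (hw : 0 < w) (hh : 0 < h)
    {A : ℕ → Option G → Option G → G → G → Prop} {S₁ S₂ : ℕ → Option G → Prop}
    (c : ℕ → ℕ → ℕ) (oN oE : ℕ → ℕ → Option G)
    (hc : ∀ x < w, ∀ y < h, c x y ≤ k)
    (hA : ∀ x < w, ∀ y < h, 1 ≤ x → 1 ≤ y → ∃ s t, oN x (y - 1) = some s ∧
      oE (x - 1) y = some t ∧ A (c x y) (oN x y) (oE x y) s t)
    (hS₁ : ∀ x < w, ∀ y < h, 1 ≤ y → S₁ (c x y) (oE x y))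
    (hS₂ : ∀ x < w, ∀ y < h, 1 ≤ x → S₂ (c x y) (oN x y))
    (hE : ∀ y < h, oE (w - 1) y = none) (hN : ∀ x < w, oN x (h - 1) = none)
    (Θ : Finset (Tile BWG (QGlue G))) (hΘ : ∀ t, IsQTile k A S₁ S₂ t → t ∈ Θ) :
    SelfAssembles ⟨Θ, fun X => southGlue k w h c oN X 0, fun Y => westGlue k w h c oE 0 Y⟩
      (QW k w) (QH k h) (QPat k w h c) := by
  refine ⟨fun X Y => ⟨QPat k w h c X Y, southGlue k w h c oN X (Y + 1),
    westGlue k w h c oE (X + 1) Y, southGlue k w h c oN X Y, westGlue k w h c oE X Y⟩,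
    ⟨?_, fun _ _ => rfl, fun _ _ => rfl, fun _ _ _ _ => rfl, fun _ _ _ _ => rfl⟩,
    fun _ _ _ _ => rfl⟩
  intro X hX Y hY
  obtain ⟨x, i, x', i', hx1, hx2, hx3, hx4, hx5, hx6, hx7, hx8, hx9⟩ := coord_cases hX
  obtain ⟨y, j, y', j', hy1, hy2, hy3, hy4, hy5, hy6, hy7, hy8, hy9⟩ :=
    coord_cases (show Y < QW k h from hY)
  apply hΘ
  simp only [southGlue, westGlue, hx3, hx4, hx5, hx6, hy3, hy4, hy5, hy6]
  rw [qPat_eq_cellColor hx1 hy1 hx2 hy2 (hx7.imp And.left id) (hy7.imp And.left id)]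
  exact isQTile_cell k w h hw hh c oN oE hc hA hS₁ hS₂ hE hN x i y j x' i' y' j'
    hx7 hy7 hx8 hy8 hx9 hy9

/-! ### Counting the tile types -/

section
variable {G : Type}

open Classical in
/-- The white tile types: `I` carries the tile types with a corner tile, `D₁` and `D₂` the
data running along bottom rows and left columns. -/
noncomputable def whiteTiles (I : Finset (Tile ℕ G)) (oN oE : Tile ℕ G → Option G)
    (D₁ D₂ : Finset (ℕ × Option G)) : Finset (Tile BWG (QGlue G)) :=
  I.image (fun t => ⟨.white, .info t.color (oN t), .info t.color (oE t),
      .raw t.south, .raw t.west⟩) ∪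
    (D₁.image (fun d => ⟨.white, .blank, .info d.1 d.2, .blank, .info d.1 d.2⟩) ∪
    (D₁.image (fun d => ⟨.white, .cnt d.1, .ofOpt d.2, .done, .info d.1 d.2⟩) ∪
    (D₂.image (fun d => ⟨.white, .info d.1 d.2, .blank, .info d.1 d.2, .blank⟩) ∪
    (D₂.image (fun d => ⟨.white, .ofOpt d.2, .cnt d.1, .info d.1 d.2, .done⟩) ∪
    {⟨.white, .blank, .done, .blank, .cnt 0⟩, ⟨.white, .done, .blank, .cnt 0, .blank⟩}))))

open Classical in
/-- The gray tile types. -/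
noncomputable def grayTiles (G : Type) (k : ℕ) : Finset (Tile BWG (QGlue G)) :=
  (Finset.range k).image (fun m => ⟨.gray, .blank, .cnt m, .blank, .cnt (m + 1)⟩) ∪
    ((Finset.range k).image (fun m => ⟨.gray, .cnt m, .blank, .cnt (m + 1), .blank⟩) ∪
    {⟨.gray, .blank, .done, .blank, .done⟩, ⟨.gray, .done, .blank, .done, .blank⟩,
      ⟨.gray, .done, .done, .done, .done⟩})

open Classical in
/-- All tile types of the simulating system, as a finite set. -/
noncomputable def qTiles (k : ℕ) (I : Finset (Tile ℕ G))
    (oN oE : Tile ℕ G → Option G) (D₁ D₂ : Finset (ℕ × Option G)) :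
    Finset (Tile BWG (QGlue G)) :=
  whiteTiles I oN oE D₁ D₂ ∪ (grayTiles G k ∪ {⟨.black, .blank, .blank, .blank, .blank⟩})

variable {k : ℕ} {I : Finset (Tile ℕ G)} {oN oE : Tile ℕ G → Option G}
  {D₁ D₂ : Finset (ℕ × Option G)}

theorem mem_whiteTiles {t : Tile BWG (QGlue G)} : t ∈ whiteTiles I oN oE D₁ D₂ ↔
    (∃ u ∈ I, ⟨.white, .info u.color (oN u), .info u.color (oE u), .raw u.south, .raw u.west⟩ = t) ∨
    (∃ d ∈ D₁, ⟨.white, .blank, .info d.1 d.2, .blank, .info d.1 d.2⟩ = t) ∨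
    (∃ d ∈ D₁, ⟨.white, .cnt d.1, .ofOpt d.2, .done, .info d.1 d.2⟩ = t) ∨
    (∃ d ∈ D₂, ⟨.white, .info d.1 d.2, .blank, .info d.1 d.2, .blank⟩ = t) ∨
    (∃ d ∈ D₂, ⟨.white, .ofOpt d.2, .cnt d.1, .info d.1 d.2, .done⟩ = t) ∨
    t = ⟨.white, .blank, .done, .blank, .cnt 0⟩ ∨ t = ⟨.white, .done, .blank, .cnt 0, .blank⟩ := by
  classical
  simp only [whiteTiles, Finset.mem_union, Finset.mem_image, Finset.mem_insert,
    Finset.mem_singleton]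

theorem mem_grayTiles {t : Tile BWG (QGlue G)} : t ∈ grayTiles G k ↔
    (∃ m < k, ⟨.gray, .blank, .cnt m, .blank, .cnt (m + 1)⟩ = t) ∨
    (∃ m < k, ⟨.gray, .cnt m, .blank, .cnt (m + 1), .blank⟩ = t) ∨
    t = ⟨.gray, .blank, .done, .blank, .done⟩ ∨ t = ⟨.gray, .done, .blank, .done, .blank⟩ ∨
    t = ⟨.gray, .done, .done, .done, .done⟩ := by
  classical
  simp only [grayTiles, Finset.mem_union, Finset.mem_image, Finset.mem_insert,
    Finset.mem_singleton, Finset.mem_range]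

theorem mem_qTiles {t : Tile BWG (QGlue G)} :
    t ∈ qTiles k I oN oE D₁ D₂ ↔
      IsQTile k (fun c n e s w => ∃ u ∈ I, u.color = c ∧ oN u = n ∧ oE u = e ∧
        u.south = s ∧ u.west = w) (fun c e => (c, e) ∈ D₁) (fun c n => (c, n) ∈ D₂) t := by
  classical
  rw [qTiles, Finset.mem_union, Finset.mem_union, Finset.mem_singleton, mem_whiteTiles,
    mem_grayTiles]
  constructor
  · rintro ((⟨u, hu, rfl⟩ | ⟨d, hd, rfl⟩ | ⟨d, hd, rfl⟩ | ⟨d, hd, rfl⟩ | ⟨d, hd, rfl⟩ |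
      rfl | rfl) | (⟨m, hm, rfl⟩ | ⟨m, hm, rfl⟩ | rfl | rfl | rfl) | rfl)
    · exact .corner ⟨u, hu, rfl, rfl, rfl, rfl, rfl⟩
    · exact .bottom hd
    · exact .bottomEnd hd
    · exact .left hd
    · exact .leftEnd hd
    · exact .hZero
    · exact .vZero
    · exact .hCount hm
    · exact .vCount hm
    · exact .hDone
    · exact .vDone
    · exact .bothDone
    · exact .black
  · rintro (⟨⟨u, hu, rfl, rfl, rfl, rfl, rfl⟩⟩ | ⟨hd⟩ | ⟨hd⟩ | ⟨hd⟩ | ⟨hd⟩ | _ | _ | ⟨hm⟩ | ⟨hm⟩ |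
      _ | _ | _ | _)
    · exact .inl (.inl ⟨u, hu, rfl⟩)
    · exact .inl (.inr (.inl ⟨_, hd, rfl⟩))
    · exact .inl (.inr (.inr (.inl ⟨_, hd, rfl⟩)))
    · exact .inl (.inr (.inr (.inr (.inl ⟨_, hd, rfl⟩))))
    · exact .inl (.inr (.inr (.inr (.inr (.inl ⟨_, hd, rfl⟩)))))
    · exact .inl (.inr (.inr (.inr (.inr (.inr (.inl rfl))))))
    · exact .inl (.inr (.inr (.inr (.inr (.inr (.inr rfl))))))
    · exact .inr (.inl (.inl ⟨_, hm, rfl⟩))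
    · exact .inr (.inl (.inr (.inl ⟨_, hm, rfl⟩)))
    · exact .inr (.inl (.inr (.inr (.inl rfl))))
    · exact .inr (.inl (.inr (.inr (.inr (.inl rfl)))))
    · exact .inr (.inl (.inr (.inr (.inr (.inr rfl)))))
    · exact .inr (.inr rfl)

theorem color_of_mem_whiteTiles {t : Tile BWG (QGlue G)} (ht : t ∈ whiteTiles I oN oE D₁ D₂) :
    t.color = .white := by
  rcases mem_whiteTiles.1 ht with ⟨_, _, rfl⟩ | ⟨_, _, rfl⟩ | ⟨_, _, rfl⟩ | ⟨_, _, rfl⟩ |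
    ⟨_, _, rfl⟩ | rfl | rfl <;> rfl

theorem color_of_mem_grayTiles {t : Tile BWG (QGlue G)} (ht : t ∈ grayTiles G k) :
    t.color = .gray := by
  rcases mem_grayTiles.1 ht with ⟨_, _, rfl⟩ | ⟨_, _, rfl⟩ | rfl | rfl | rfl <;> rfl

theorem card_whiteTiles :
    (whiteTiles I oN oE D₁ D₂).card ≤ I.card + 2 * D₁.card + 2 * D₂.card + 2 := by
  classical
  rw [whiteTiles]
  refine ((Finset.card_union_le _ _).trans (Nat.add_le_add Finset.card_image_le
    ((Finset.card_union_le _ _).trans (Nat.add_le_add Finset.card_image_le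
    ((Finset.card_union_le _ _).trans (Nat.add_le_add Finset.card_image_le
    ((Finset.card_union_le _ _).trans (Nat.add_le_add Finset.card_image_le
    ((Finset.card_union_le _ _).trans (Nat.add_le_add Finset.card_image_le
    Finset.card_le_two)))))))))).trans ?_
  omega

theorem card_grayTiles : (grayTiles G k).card ≤ 2 * k + 3 := by
  classical
  rw [grayTiles]
  refine ((Finset.card_union_le _ _).trans (Nat.add_le_add Finset.card_image_le
    ((Finset.card_union_le _ _).trans (Nat.add_le_add Finset.card_image_le
    Finset.card_le_three)))).trans ?_
  rw [Finset.card_range]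
  omega

theorem countColor_qTiles (sN sE : ℕ → QGlue G) :
    countColor ⟨qTiles k I oN oE D₁ D₂, sN, sE⟩ BWG.black ≤ 1 ∧
    countColor ⟨qTiles k I oN oE D₁ D₂, sN, sE⟩ BWG.white ≤
      I.card + 2 * D₁.card + 2 * D₂.card + 2 ∧
    countColor ⟨qTiles k I oN oE D₁ D₂, sN, sE⟩ BWG.gray ≤ 2 * k + 3 := by
  have key : ∀ t ∈ qTiles k I oN oE D₁ D₂, t ∈ whiteTiles I oN oE D₁ D₂ ∨ t ∈ grayTiles G k ∨
      t ∈ ({⟨.black, .blank, .blank, .blank, .blank⟩} : Finset (Tile BWG (QGlue G))) := by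
    classical
    intro t ht
    rwa [qTiles, Finset.mem_union, Finset.mem_union] at ht
  refine ⟨(Finset.card_le_card fun t ht => ?_).trans
      (Finset.card_singleton (⟨.black, .blank, .blank, .blank, .blank⟩ :
        Tile BWG (QGlue G))).le,
    (Finset.card_le_card fun t ht => ?_).trans (card_whiteTiles (I := I) (oN := oN) (oE := oE)),
    (Finset.card_le_card fun t ht => ?_).trans (card_grayTiles (G := G))⟩
  all_goals
    obtain ⟨ht, hc⟩ := Finset.mem_filter.1 ht
    have h := key t ht
  · rcases h with h | h | h
    · rw [color_of_mem_whiteTiles h] at hc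
      cases hc
    · rw [color_of_mem_grayTiles h] at hc
      cases hc
    · exact h
  · rcases h with h | h | h
    · exact h
    · rw [color_of_mem_grayTiles h] at hc
      cases hc
    · rw [Finset.mem_singleton.1 h] at hc
      cases hc
  · rcases h with h | h | h
    · rw [color_of_mem_whiteTiles h] at hc
      cases hc
    · exact h
    · rw [Finset.mem_singleton.1 h] at hc
      cases hc

end

/-! ### The structure of the pattern `P_F` -/

/-- A filler color determines its position. -/
theorem place_cases (bs : List PBlock) (hbs : ∀ b ∈ bs, ∀ x y n, b.2.2 x y ≠ .uniq n)
    (x0 x y n : ℕ) (h : place bs x0 x y = .uniq n) : n = Nat.pair x y := by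
  induction bs generalizing x0 with
  | nil => simpa [place, eq_comm] using h
  | cons b bs ih =>
    rw [place] at h
    split_ifs at h with h1 h2
    · exact absurd h (hbs b (by simp) _ _ _)
    · simpa [eq_comm] using h
    · exact ih (fun b' hb' => hbs b' (by simp [hb'])) _ h

/-- There is only filler to the left of the first block, to the right of the last block, and in
rows which the blocks do not reach. -/
theorem place_border (bs : List PBlock) (hbs : ∀ b ∈ bs, b.2.1 ≤ 4) (x0 x y : ℕ)
    (h : x < x0 ∨ x0 + (bs.map (fun b => b.1 + 1)).sum ≤ x + 1 ∨ y = 0 ∨ 5 ≤ y) :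
    place bs x0 x y = .uniq (Nat.pair x y) := by
  induction bs generalizing x0 with
  | nil => simp [place]
  | cons b bs ih =>
    have hb := hbs b (by simp)
    rw [place]
    simp only [List.map_cons, List.sum_cons] at h
    rw [if_neg (by omega)]
    split_ifs with h2
    · rfl
    · exact ih (fun b' hb' => hbs b' (by simp [hb'])) _ (by omega)

theorem blocksOf_ne_uniq (F : CNF3) (b : PBlock) (hb : b ∈ blocksOf F) (x y n : ℕ) :
    b.2.2 x y ≠ .uniq n := by
  simp only [blocksOf, List.mem_append, List.mem_cons, List.not_mem_nil, or_false,
    List.mem_flatMap, List.mem_map] at hb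
  rcases hb with ((rfl | rfl | rfl | rfl | rfl | rfl) | ⟨v, _, (rfl | rfl | rfl)⟩) | ⟨cl, _, rfl⟩
  · simp only [pPat]; split_ifs <;> simp
  · simp only [qPat]; split <;> simp
  · simp only [qPat]; split <;> simp
  · simp only [qPat]; split <;> simp
  · simp only [qPat]; split <;> simp
  · simp only [q5Pat]; split <;> simp
  · simp only [r1Pat]; split <;> simp
  · simp only [r2Pat]; split <;> simp
  · simp only [r3Pat]; split <;> simp
  · simp only [sPat, litColor]; split <;> (try split_ifs) <;> simp

theorem blocksOf_height (F : CNF3) (b : PBlock) (hb : b ∈ blocksOf F) : b.2.1 ≤ 4 := by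
  simp only [blocksOf, List.mem_append, List.mem_cons, List.not_mem_nil, or_false,
    List.mem_flatMap, List.mem_map] at hb
  rcases hb with ((rfl | rfl | rfl | rfl | rfl | rfl) | ⟨v, _, (rfl | rfl | rfl)⟩) | ⟨cl, _, rfl⟩ <;>
    simp

theorem sum_widths_blocksOf (F : CNF3) :
    1 + ((blocksOf F).map (fun b => b.1 + 1)).sum = widthF F := by
  have h : ∀ n, (((List.range n).flatMap
      (fun v => [(2, 2, r1Pat v), (2, 2, r2Pat v), (4, 2, r3Pat v)] : ℕ → List PBlock)).map
        (fun b => b.1 + 1)).sum = 11 * n := by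
    intro n
    induction n with
    | zero => simp
    | succ n ih =>
      rw [List.range_succ, List.flatMap_append, List.map_append, List.sum_append, ih]
      simp
      ring
  rw [blocksOf, List.map_append, List.map_append, List.sum_append, List.sum_append, h, widthF]
  simp [Function.comp_def]
  ring

theorem patF_border (F : CNF3) {x y : ℕ}
    (h : x = 0 ∨ x = widthF F - 1 ∨ y = 0 ∨ y = 5) : patF F x y = .uniq (Nat.pair x y) := by
  have hs := sum_widths_blocksOf F
  exact place_border _ (blocksOf_height F) 1 x y (by omega)

/-- A color on the border of `P_F` occurs nowhere else. -/
theorem patF_border_unique (F : CNF3) {x y x' y' : ℕ}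
    (h : x = 0 ∨ x = widthF F - 1 ∨ y = 0 ∨ y = 5) (he : patF F x y = patF F x' y') :
    x = x' ∧ y = y' := by
  rw [patF_border F h] at he
  have := place_cases _ (blocksOf_ne_uniq F) _ _ _ _ he.symm
  exact Nat.pair_eq_pair.1 this

/-- The north-east corners of the eight `2 × 2` blocks of the first subpattern, with the `OR`
positions below and to the west of them. -/
theorem patF_X (F : CNF3) (i : Fin 8) :
    patF F (2 * i + 2) 1 = .orC ∧ patF F (2 * i + 1) 2 = .orC ∧
      patF F (2 * i + 2) 2 = .Y i := by
  fin_cases i <;> simp [patF, blocksOf, place, pPat]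

/-- The gates of the four subpatterns `qPat`, with the positions below, to the west, and to the
south-east of them. -/
theorem patF_gate (F : CNF3) (i : Fin 4) :
    patF F (5 * i + 20) 3 = .orC ∧ patF F (5 * i + 19) 4 = .cW ∧
      patF F (5 * i + 20) 4 = .gate i ∧ (i ≠ 0 → patF F (5 * i + 21) 3 = .plus) := by
  fin_cases i <;> simp [patF, blocksOf, place, qPat]

/-! ### Coinciding outputs of tile types -/

/-- With at most `k + 3` tile types for `k` colors, three colors share at most six of them. -/
theorem card_three_colors {G : Type} {S : Finset (Tile ℕ G)} {k : ℕ} (hS : S.card ≤ k + 3)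
    (hcol : ∀ c ∈ Finset.Icc 1 k, ∃ t ∈ S, t.color = c) {a b c : ℕ}
    (ha : a ∈ Finset.Icc 1 k) (hb : b ∈ Finset.Icc 1 k) (hc : c ∈ Finset.Icc 1 k)
    (hab : a ≠ b) (hac : a ≠ c) (hbc : b ≠ c) :
    (S.filter (·.color = a)).card + (S.filter (·.color = b)).card +
      (S.filter (·.color = c)).card ≤ 6 := by
  classical
  have habc : ({a, b, c} : Finset ℕ) ⊆ Finset.Icc 1 k := by
    intro x hx
    simp only [Finset.mem_insert, Finset.mem_singleton] at hx
    rcases hx with rfl | rfl | rfl <;> assumption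
  have h3 : ({a, b, c} : Finset ℕ).card = 3 := Finset.card_eq_three.2 ⟨a, b, c, hab, hac, hbc, rfl⟩
  have h1 := Finset.card_filter_add_card_filter_not (s := S)
    (fun t => t.color ∈ ({a, b, c} : Finset ℕ))
  have h2 : (S.filter (fun t => t.color ∈ ({a, b, c} : Finset ℕ))).card =
      (S.filter (·.color = a)).card + (S.filter (·.color = b)).card +
      (S.filter (·.color = c)).card := by
    rw [Finset.card_eq_sum_card_fiberwise (f := fun t : Tile ℕ G => t.color)
      (s := S.filter (fun t => t.color ∈ ({a, b, c} : Finset ℕ))) (t := {a, b, c})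
      (fun t ht => Finset.mem_coe.2 (Finset.mem_filter.1 (Finset.mem_coe.1 ht)).2)]
    have h : ∀ d ∈ ({a, b, c} : Finset ℕ),
        ((S.filter (fun t => t.color ∈ ({a, b, c} : Finset ℕ))).filter (·.color = d)).card =
          (S.filter (·.color = d)).card := by
      intro d hd
      congr 1
      ext t
      simp only [Finset.mem_filter]
      exact ⟨fun h => ⟨h.1.1, h.2⟩, fun h => ⟨⟨h.1, h.2 ▸ hd⟩, h.2⟩⟩
    rw [Finset.sum_congr rfl h, Finset.sum_insert (by simp [hab, hac]),
      Finset.sum_insert (by simp [hbc]), Finset.sum_singleton, add_assoc]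
  have h4 : Finset.Icc 1 k \ {a, b, c} ⊆
      (S.filter (fun t => ¬ t.color ∈ ({a, b, c} : Finset ℕ))).image (·.color) := by
    intro d hd
    obtain ⟨hd1, hd2⟩ := Finset.mem_sdiff.1 hd
    obtain ⟨t, ht, rfl⟩ := hcol d hd1
    exact Finset.mem_image_of_mem _ (Finset.mem_filter.2 ⟨ht, hd2⟩)
  have h5 := (Finset.card_le_card h4).trans Finset.card_image_le
  rw [Finset.card_sdiff_of_subset habc, h3, Nat.card_Icc] at h5
  have h6 := Finset.card_le_card habc
  rw [h3, Nat.card_Icc] at h6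
  omega

/-- With at most `k + 3` tile types, two of the pairs of a color and an output are lost to
coincidences. If the white `c` has only one tile type, then the four gates need four `OR` tile
types; this leaves one tile type for `+`, so three of these `OR` tile types share their east
output. Two or more tile types for the white `c` leave only three for `OR` and one for `+`; then
the eight colors `Yᵢ` force three distinct east outputs of `OR` tiles, so that all three gates
next to a `+` have the same `OR` tile below, and the white `c` needs three tile types, which is
one too many. The colors `o`, `g`, `p` stand
for `OR`, the white `c` and `+`; `a`, `b`, `Y` are the tiles of the blocks of the first
subpattern, and `r`, `c`, `q`, `s` are the `OR` tiles, the tiles to the west of the gates, the gates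
and the tiles to the east of the `OR` tiles in the four gate subpatterns. -/
theorem card_outputs_le {G : Type} [DecidableEq G] {S : Finset (Tile ℕ G)} {k : ℕ}
    (hD : ∀ t₁ ∈ S, ∀ t₂ ∈ S, t₁ ≠ t₂ → t₁.south ≠ t₂.south ∨ t₁.west ≠ t₂.west)
    (hS : S.card ≤ k + 3) (hcol : ∀ c ∈ Finset.Icc 1 k, ∃ t ∈ S, t.color = c) {o g p : ℕ}
    (ho : o ∈ Finset.Icc 1 k) (hg : g ∈ Finset.Icc 1 k) (hp : p ∈ Finset.Icc 1 k)
    (hog : o ≠ g) (hop : o ≠ p) (hgp : g ≠ p)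
    (a b Y : Fin 8 → Tile ℕ G) (ha : ∀ i, a i ∈ S.filter (·.color = o))
    (hb : ∀ i, b i ∈ S.filter (·.color = o)) (hY : ∀ i, Y i ∈ S)
    (hYinj : Function.Injective fun i => (Y i).color)
    (haY : ∀ i, (Y i).south = (a i).north) (hbY : ∀ i, (Y i).west = (b i).east)
    (r c q s : Fin 4 → Tile ℕ G) (hr : ∀ i, r i ∈ S.filter (·.color = o))
    (hc : ∀ i, c i ∈ S.filter (·.color = g)) (hq : ∀ i, q i ∈ S)
    (hqinj : Function.Injective fun i => (q i).color)
    (hs : ∀ i, i ≠ 0 → s i ∈ S.filter (·.color = p))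
    (hrq : ∀ i, (q i).south = (r i).north) (hcq : ∀ i, (q i).west = (c i).east)
    (hrs : ∀ i, i ≠ 0 → (s i).west = (r i).east) :
    (S.image fun t => (t.color, t.east)).card + (S.image fun t => (t.color, t.north)).card ≤
      2 * k + 4 := by
  have h6 := card_three_colors hS hcol ho hg hp hog hop hgp
  set M := S.filter (·.color = o) with hM
  have hg0 : 0 < (S.filter (·.color = g)).card := Finset.card_pos.2 ⟨_, hc 0⟩
  have hp0 : 0 < (S.filter (·.color = p)).card := Finset.card_pos.2 ⟨_, hs 1 (by decide)⟩
  -- the eight tiles `Y i` are told apart by the outputs of `OR` tiles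
  have h8 : 8 ≤ (M.image (·.north)).card * (M.image (·.east)).card := by
    rw [← Finset.card_product]
    have : (Finset.univ.image fun i => ((a i).north, (b i).east)).card = 8 := by
      rw [Finset.card_image_of_injective]
      · simp
      · intro i j hij
        by_contra hne
        have h1 : Y i ≠ Y j := fun h => hne (hYinj (congrArg Tile.color h))
        have h2 := hD _ (hY i) _ (hY j) h1
        simp only [Prod.mk.injEq] at hij
        rw [haY, haY, hbY, hbY] at h2
        tauto
    rw [← this]
    refine Finset.card_le_card fun x hx => ?_
    obtain ⟨i, -, rfl⟩ := Finset.mem_image.1 hx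
    exact Finset.mem_product.2 ⟨Finset.mem_image_of_mem _ (ha i), Finset.mem_image_of_mem _ (hb i)⟩
  have hN : (M.image (·.north)).card ≤ M.card := Finset.card_image_le
  have hE : (M.image (·.east)).card ≤ M.card := Finset.card_image_le
  have h3 : 3 ≤ M.card := by
    by_contra! h
    have := Nat.mul_le_mul (hN.trans (Nat.le_of_lt_succ h)) (hE.trans (Nat.le_of_lt_succ h))
    omega
  -- a gate is determined by the tiles below and to the west of it
  have hgate : ∀ i j, (r i).north = (r j).north → (c i).east = (c j).east → i = j := by
    intro i j h1 h2
    by_contra hne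
    have h3 : q i ≠ q j := fun h => hne (hqinj (congrArg Tile.color h))
    have h4 := hD _ (hq i) _ (hq j) h3
    rw [hrq, hrq, hcq, hcq] at h4
    tauto
  have heast : (S.filter (·.color = p)).card ≤ 1 → ∀ i j, i ≠ 0 → j ≠ 0 →
      (r i).east = (r j).east := by
    intro h i j hi hj
    rw [← hrs i hi, ← hrs j hj, Finset.card_le_one.1 h _ (hs i hi) _ (hs j hj)]
  have hCN : (S.image fun t => (t.color, t.north)).card ≤ S.card := Finset.card_image_le
  by_cases hg1 : (S.filter (·.color = g)).card ≤ 1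
  · have hri : Function.Injective r := fun i j hij =>
      hgate i j (by rw [hij]) (by rw [Finset.card_le_one.1 hg1 _ (hc i) _ (hc j)])
    have h4 : 4 ≤ M.card := by
      have : (Finset.univ.image r).card = 4 := by
        rw [Finset.card_image_of_injective _ hri]; simp
      rw [← this]
      refine Finset.card_le_card fun x hx => ?_
      obtain ⟨i, -, rfl⟩ := Finset.mem_image.1 hx
      exact hr i
    have he := heast (by omega)
    have hmem : ∀ i, r i ∈ S ∧ (r i).color = o := fun i => Finset.mem_filter.1 (hr i)
    -- `r 2` and `r 3` have the same color and east output as `r 1`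
    have hsub : (S.image fun t => (t.color, t.east)) ⊆
        ((S.erase (r 2)).erase (r 3)).image fun t => (t.color, t.east) := by
      intro x hx
      obtain ⟨t, ht, rfl⟩ := Finset.mem_image.1 hx
      have h1 : r 1 ∈ (S.erase (r 2)).erase (r 3) := by
        simp only [Finset.mem_erase]
        exact ⟨fun h => absurd (hri h) (by decide), fun h => absurd (hri h) (by decide), (hmem 1).1⟩
      by_cases h2 : t = r 2 ∨ t = r 3
      · refine Finset.mem_image.2 ⟨r 1, h1, ?_⟩
        rcases h2 with rfl | rfl
        · rw [(hmem 1).2, (hmem 2).2, he 1 2 (by decide) (by decide)]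
        · rw [(hmem 1).2, (hmem 3).2, he 1 3 (by decide) (by decide)]
      · push Not at h2
        exact Finset.mem_image_of_mem _ (by simp [h2, ht])
    have h5 := (Finset.card_le_card hsub).trans Finset.card_image_le
    have h7 : r 3 ∈ S.erase (r 2) :=
      Finset.mem_erase.2 ⟨fun h => absurd (hri h) (by decide), (hmem 3).1⟩
    have h9 := Finset.card_erase_add_one h7
    have h10 := Finset.card_erase_add_one (hmem 2).1
    omega
  · exfalso
    have hM3 : M.card = 3 := by omega
    have he := heast (by omega)
    have hE3 : (M.image (·.east)).card = M.card := by
      by_contra h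
      have := Nat.mul_le_mul (hN.trans hM3.le)
        (show (M.image (·.east)).card ≤ 2 by omega)
      omega
    have hinj := Finset.card_image_iff.1 hE3
    have hrr : ∀ i j, i ≠ 0 → j ≠ 0 → r i = r j := fun i j hi hj =>
      hinj (hr i) (hr j) (he i j hi hj)
    have hg3 : 3 ≤ (S.filter (·.color = g)).card := by
      have : (Finset.univ.image fun i : Fin 3 => c i.succ).card = 3 := by
        rw [Finset.card_image_of_injective]
        · simp
        · intro i j hij
          have := hgate i.succ j.succ
            (by rw [hrr i.succ j.succ (Fin.succ_ne_zero _) (Fin.succ_ne_zero _)])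
            (congrArg Tile.east hij)
          exact Fin.succ_injective _ this
      rw [← this]
      refine Finset.card_le_card fun x hx => ?_
      obtain ⟨i, -, rfl⟩ := Finset.mem_image.1 hx
      exact hc _
    omega

/-! ### The simulating system -/

/-- The properties of the patterns in `InI` that the counting relies on. -/
theorem InI.basic {k w h : ℕ} {P : ℕ → ℕ → ℕ} (hI : InI k w h P) :
    0 < w ∧ 0 < h ∧ (∀ x < w, ∀ y < h, P x y ∈ Finset.Icc 1 k) ∧
    (∀ c ∈ Finset.Icc 1 k, ∃ x < w, ∃ y < h, P x y = c) ∧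
    ∀ x < w, ∀ y < h, ∀ x' < w, ∀ y' < h, (x = 0 ∨ x = w - 1 ∨ y = 0 ∨ y = h - 1) →
      P x y = P x' y' → x = x' ∧ y = y' := by
  obtain ⟨F, ρ, rfl, rfl, hρ, hP⟩ := hI
  have hmem : ∀ x < widthF F, ∀ y < 6, patF F x y ∈ colorsOf (widthF F) 6 (patF F) :=
    fun x hx y hy => Finset.mem_image.2 ⟨(x, y), by simp [hx, hy], rfl⟩
  refine ⟨by simp [widthF], by norm_num, fun x hx y hy => ?_, fun c hc => ?_,
    fun x hx y hy x' hx' y' hy' hb he => ?_⟩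
  · rw [hP x hx y hy, ← Finset.mem_coe, Finset.coe_Icc]
    exact hρ.mapsTo (hmem x hx y hy)
  · rw [← Finset.mem_coe, Finset.coe_Icc] at hc
    obtain ⟨p, hp, rfl⟩ := hρ.surjOn hc
    obtain ⟨⟨x, y⟩, hq, rfl⟩ := Finset.mem_image.1 (Finset.mem_coe.1 hp)
    simp only [Finset.mem_product, Finset.mem_range] at hq
    exact ⟨x, hq.1, y, hq.2, hP x hq.1 y hq.2⟩
  · rw [hP x hx y hy, hP x' hx' y' hy'] at he
    exact patF_border_unique F hb (hρ.injOn (hmem x hx y hy) (hmem x' hx' y' hy') he)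

/-- The bound of `card_outputs_le` for a directed system that assembles `P`. -/
theorem InI.card_outputs_le {G : Type} [DecidableEq G] {k w h : ℕ}
    {P : ℕ → ℕ → ℕ} (hI : InI k w h P) {T : RTAS ℕ G} (hD : DirectedTAS T) (hT : T.tiles.card ≤ k + 3)
    {f : ℕ → ℕ → Tile ℕ G} (hf : IsAssignment T w h f)
    (hcol : ∀ x < w, ∀ y < h, (f x y).color = P x y) :
    (T.tiles.image fun t => (t.color, t.east)).card +
      (T.tiles.image fun t => (t.color, t.north)).card ≤ 2 * k + 4 := by
  obtain ⟨-, -, hPk, hsurj, -⟩ := hI.basic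
  obtain ⟨F, ρ, rfl, rfl, hρ, hP⟩ := hI
  obtain ⟨hf, -, -, hfE, hfN⟩ := hf
  have hw : 45 ≤ widthF F := by simp only [widthF]; omega
  have hmem : ∀ x < widthF F, ∀ y < 6, patF F x y ∈ colorsOf (widthF F) 6 (patF F) :=
    fun x hx y hy => Finset.mem_image.2 ⟨(x, y), by simp [hx, hy], rfl⟩
  have hinj : ∀ x < widthF F, ∀ y < 6, ∀ x' < widthF F, ∀ y' < 6,
      P x y = P x' y' → patF F x y = patF F x' y' := fun x hx y hy x' hx' y' hy' he => by
    rw [hP x hx y hy, hP x' hx' y' hy'] at he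
    exact hρ.injOn (hmem x hx y hy) (hmem x' hx' y' hy') he
  have hcolρ : ∀ x < widthF F, ∀ y < 6, (f x y).color = ρ (patF F x y) := fun x hx y hy => by
    rw [hcol x hx y hy, hP x hx y hy]
  have hIcc : ∀ x < widthF F, ∀ y < 6, ∀ p, patF F x y = p → ρ p ∈ Finset.Icc 1 k :=
    fun x hx y hy p hp => by
      rw [← hp, ← hP x hx y hy]
      exact hPk x hx y hy
  have hne : ∀ x < widthF F, ∀ y < 6, ∀ x' < widthF F, ∀ y' < 6, ∀ p q,
      patF F x y = p → patF F x' y' = q → p ≠ q → ρ p ≠ ρ q := by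
    rintro x hx y hy x' hx' y' hy' _ _ rfl rfl hpq he
    exact hpq (hρ.injOn (hmem x hx y hy) (hmem x' hx' y' hy') he)
  have hfil : ∀ x < widthF F, ∀ y < 6, ∀ p, patF F x y = p →
      f x y ∈ T.tiles.filter (·.color = ρ p) := fun x hx y hy p hp =>
    Finset.mem_filter.2 ⟨hf x hx y hy, by rw [hcolρ x hx y hy, hp]⟩
  have hX := patF_X F
  have hQ := patF_gate F
  refine _root_.card_outputs_le hD hT (fun c hc => ?_) (o := ρ .orC) (g := ρ .cW) (p := ρ .plus)
    (hIcc 2 (by omega) 1 (by omega) _ (hX 0).1)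
    (hIcc 19 (by omega) 4 (by omega) _ (hQ 0).2.1)
    (hIcc 26 (by omega) 3 (by omega) _ ((hQ 1).2.2.2 (by decide)))
    (hne 2 (by omega) 1 (by omega) 19 (by omega) 4 (by omega) _ _ (hX 0).1 (hQ 0).2.1 (by simp))
    (hne 2 (by omega) 1 (by omega) 26 (by omega) 3 (by omega) _ _ (hX 0).1
      ((hQ 1).2.2.2 (by decide)) (by simp))
    (hne 19 (by omega) 4 (by omega) 26 (by omega) 3 (by omega) _ _ (hQ 0).2.1
      ((hQ 1).2.2.2 (by decide)) (by simp))
    (fun i => f (2 * i + 2) 1) (fun i => f (2 * i + 1) 2) (fun i => f (2 * i + 2) 2)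
    (fun i => hfil _ (by omega) _ (by omega) _ (hX i).1)
    (fun i => hfil _ (by omega) _ (by omega) _ (hX i).2.1)
    (fun i => hf _ (by omega) _ (by omega)) (fun i j hij => ?_)
    (fun i => hfN _ (by omega) 1 (by omega)) (fun i => hfE (2 * i + 1) (by omega) _ (by omega))
    (fun i => f (5 * i + 20) 3) (fun i => f (5 * i + 19) 4) (fun i => f (5 * i + 20) 4)
    (fun i => f (5 * i + 21) 3)
    (fun i => hfil _ (by omega) _ (by omega) _ (hQ i).1)
    (fun i => hfil _ (by omega) _ (by omega) _ (hQ i).2.1)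
    (fun i => hf _ (by omega) _ (by omega)) (fun i j hij => ?_)
    (fun i hi => hfil _ (by omega) _ (by omega) _ ((hQ i).2.2.2 hi))
    (fun i => hfN _ (by omega) 3 (by omega)) (fun i => hfE (5 * i + 19) (by omega) _ (by omega))
    (fun i _ => hfE (5 * i + 20) (by omega) _ (by omega))
  · obtain ⟨x, hx, y, hy, rfl⟩ := hsurj c hc
    exact ⟨f x y, hf x hx y hy, hcol x hx y hy⟩
  · simp only [hcol _ (show 2 * (i : ℕ) + 2 < widthF F by omega) 2 (by omega),
      hcol _ (show 2 * (j : ℕ) + 2 < widthF F by omega) 2 (by omega)] at hij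
    have := hinj _ (by omega) _ (by omega) _ (by omega) _ (by omega) hij
    rw [(hX i).2.2, (hX j).2.2] at this
    exact PColor.Y.inj this
  · simp only [hcol _ (show 5 * (i : ℕ) + 20 < widthF F by omega) 4 (by omega),
      hcol _ (show 5 * (j : ℕ) + 20 < widthF F by omega) 4 (by omega)] at hij
    have := hinj _ (by omega) _ (by omega) _ (by omega) _ (by omega) hij
    rw [(hQ i).2.2.1, (hQ j).2.2.1] at this
    exact PColor.gate.inj this

/-- Dropping the tile types with a color in `B` saves at least `B.card` pairs of a color and an
output. The function `out` may identify outputs, depending on the color. -/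
theorem card_image_outputs_add {G H : Type} [DecidableEq G] [DecidableEq H]
    {S : Finset (Tile ℕ G)} {B : Finset ℕ}
    (hB : ∀ c ∈ B, ∃ t ∈ S, t.color = c) (g : Tile ℕ G → G) (out : ℕ → G → H) :
    ((S.filter fun t => t.color ∉ B).image fun t => (t.color, out t.color (g t))).card + B.card ≤
      (S.image fun t => (t.color, g t)).card := by
  have h1 : ((S.filter fun t => t.color ∉ B).image fun t => (t.color, out t.color (g t))).card ≤
      ((S.image fun t => (t.color, g t)).filter fun d => d.1 ∉ B).card := by
    refine le_trans (Finset.card_le_card ?_)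
      (Finset.card_image_le (f := fun d : ℕ × G => (d.1, out d.1 d.2)))
    intro d hd
    obtain ⟨t, ht, rfl⟩ := Finset.mem_image.1 hd
    obtain ⟨ht, htB⟩ := Finset.mem_filter.1 ht
    exact Finset.mem_image.2 ⟨(t.color, g t),
      Finset.mem_filter.2 ⟨Finset.mem_image_of_mem _ ht, htB⟩, rfl⟩
  have h2 : B.card ≤ ((S.image fun t => (t.color, g t)).filter fun d => d.1 ∈ B).card := by
    refine le_trans (Finset.card_le_card ?_) (Finset.card_image_le (f := Prod.fst))
    intro c hc
    obtain ⟨t, ht, rfl⟩ := hB c hc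
    exact Finset.mem_image.2 ⟨(t.color, g t),
      Finset.mem_filter.2 ⟨Finset.mem_image_of_mem _ ht, hc⟩, rfl⟩
  have h3 := Finset.card_filter_add_card_filter_not (s := S.image fun t => (t.color, g t))
    (fun d => d.1 ∈ B)
  omega

/-- If the pattern `P` (with `(P, m) ∈ ℐ`, `C(P) = [k]`) can be self-assembled by a
DTAS `T` with at most `m = |C(P)| + 3 = k + 3` tile types, then the pattern `Q` can
be self-assembled by a DTAS `Θ` using at most `m_b = 1` black tile types,
`m_w = 5k − 3(w(P) + h(P)) + 14` white tile types and `m_g = 2k + 3` gray tile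
types. -/
theorem q_self_assembly_of_p_self_assembly {G₁ : Type} [DecidableEq G₁]
    (k w h : ℕ) (P : ℕ → ℕ → ℕ) (hI : InI k w h P)
    (T : RTAS ℕ G₁) (hD : DirectedTAS T) (hc : T.tiles.card ≤ k + 3)
    (hSA : SelfAssembles T w h P) :
    ∃ (G₂ : Type) (Θ : RTAS BWG G₂), DirectedTAS Θ ∧
      countColor Θ BWG.black ≤ 1 ∧
      countColor Θ BWG.white ≤ 5 * k + 14 - 3 * (w + h) ∧
      countColor Θ BWG.gray ≤ 2 * k + 3 ∧
      SelfAssembles Θ (QW k w) (QH k h) (QPat k w h P) := by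
  classical
  obtain ⟨hw, hh, hPk, hsurj, hborder⟩ := hI.basic
  obtain ⟨f, hf, hcol⟩ := hSA
  have hout := hI.card_outputs_le hD hc hf hcol
  obtain ⟨hfT, -, -, hfE, hfN⟩ := hf
  have htile : ∀ x < w, ∀ y < h, ∃ t ∈ T.tiles, t.color = P x y := fun x hx y hy =>
    ⟨f x y, hfT x hx y hy, hcol x hx y hy⟩
  -- the colors of the four sides of `P`
  set B := (Finset.range w).image (P · 0) with hBdef
  set U := (Finset.range w).image (P · (h - 1)) with hUdef
  set L := (Finset.range h).image (P 0 ·) with hLdef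
  set R := (Finset.range h).image (P (w - 1) ·) with hRdef
  have hmemB : ∀ x < w, ∀ y < h, (P x y ∈ B ↔ y = 0) := fun x hx y hy => by
    refine ⟨fun hm => ?_, fun hy0 => Finset.mem_image.2 ⟨x, Finset.mem_range.2 hx, by rw [hy0]⟩⟩
    obtain ⟨x', hx', he⟩ := Finset.mem_image.1 hm
    exact (hborder x' (Finset.mem_range.1 hx') 0 hh x hx y hy (by simp) he).2.symm
  have hmemU : ∀ x < w, ∀ y < h, (P x y ∈ U ↔ y = h - 1) := fun x hx y hy => by
    refine ⟨fun hm => ?_, fun hy0 => Finset.mem_image.2 ⟨x, Finset.mem_range.2 hx, by rw [hy0]⟩⟩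
    obtain ⟨x', hx', he⟩ := Finset.mem_image.1 hm
    exact (hborder x' (Finset.mem_range.1 hx') (h - 1) (by omega) x hx y hy (by simp) he).2.symm
  have hmemL : ∀ x < w, ∀ y < h, (P x y ∈ L ↔ x = 0) := fun x hx y hy => by
    refine ⟨fun hm => ?_, fun hx0 => Finset.mem_image.2 ⟨y, Finset.mem_range.2 hy, by rw [hx0]⟩⟩
    obtain ⟨y', hy', he⟩ := Finset.mem_image.1 hm
    exact (hborder 0 hw y' (Finset.mem_range.1 hy') x hx y hy (by simp) he).1.symm
  have hmemR : ∀ x < w, ∀ y < h, (P x y ∈ R ↔ x = w - 1) := fun x hx y hy => by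
    refine ⟨fun hm => ?_, fun hx0 => Finset.mem_image.2 ⟨y, Finset.mem_range.2 hy, by rw [hx0]⟩⟩
    obtain ⟨y', hy', he⟩ := Finset.mem_image.1 hm
    exact (hborder (w - 1) (by omega) y' (Finset.mem_range.1 hy') x hx y hy (by simp) he).1.symm
  have hBw : B.card = w := by
    rw [hBdef, Finset.card_image_of_injOn, Finset.card_range]
    intro x hx x' hx' he
    exact (hborder x (by simpa using hx) 0 hh x' (by simpa using hx') 0 hh (by simp) he).1
  have hLh : L.card = h := by
    rw [hLdef, Finset.card_image_of_injOn, Finset.card_range]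
    intro y hy y' hy' he
    exact (hborder 0 hw y (by simpa using hy) 0 hw y' (by simpa using hy') (by simp) he).2
  have htB : ∀ c ∈ B, ∃ t ∈ T.tiles, t.color = c := fun c hc => by
    obtain ⟨x, hx, rfl⟩ := Finset.mem_image.1 hc
    exact htile x (Finset.mem_range.1 hx) 0 hh
  have htL : ∀ c ∈ L, ∃ t ∈ T.tiles, t.color = c := fun c hc => by
    obtain ⟨y, hy, rfl⟩ := Finset.mem_image.1 hc
    exact htile 0 hw y (Finset.mem_range.1 hy)
  -- supertiles in the top row and the right column output nothing
  let oN : ℕ → G₁ → Option G₁ := fun c g => if c ∈ U then none else some g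
  let oE : ℕ → G₁ → Option G₁ := fun c g => if c ∈ R then none else some g
  let outN : Tile ℕ G₁ → Option G₁ := fun t => oN t.color t.north
  let outE : Tile ℕ G₁ → Option G₁ := fun t => oE t.color t.east
  -- only supertiles outside the bottom row and the left column have a corner tile
  let I := T.tiles.filter fun t => t.color ∉ B ∪ L
  let D₁ := (T.tiles.filter fun t => t.color ∉ B).image fun t => (t.color, outE t)
  let D₂ := (T.tiles.filter fun t => t.color ∉ L).image fun t => (t.color, outN t)
  have hI_card : I.card + (w + h) ≤ T.tiles.card + 1 := by
    have h1 : (B ∪ L).card ≤ (T.tiles.filter fun t => t.color ∈ B ∪ L).card := by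
      refine le_trans (Finset.card_le_card ?_) (Finset.card_image_le (f := Tile.color))
      intro c hc
      obtain ⟨t, ht, rfl⟩ := (Finset.mem_union.1 hc).elim (htB c) (htL c)
      exact Finset.mem_image_of_mem _ (Finset.mem_filter.2 ⟨ht, hc⟩)
    have h2 : (B ∩ L).card ≤ 1 := by
      rw [← Finset.card_singleton (P 0 0)]
      refine Finset.card_le_card fun c hc => ?_
      obtain ⟨hcB, hcL⟩ := Finset.mem_inter.1 hc
      obtain ⟨x, hx, rfl⟩ := Finset.mem_image.1 hcB
      rw [(hmemL x (Finset.mem_range.1 hx) 0 hh).1 hcL]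
      exact Finset.mem_singleton_self _
    have h3 := Finset.card_union_add_card_inter B L
    have h4 := Finset.card_filter_add_card_filter_not (s := T.tiles) fun t => t.color ∈ B ∪ L
    change _ + I.card = _ at h4
    omega
  have hD₁ : D₁.card + B.card ≤ _ := card_image_outputs_add htB Tile.east oE
  have hD₂ : D₂.card + L.card ≤ _ := card_image_outputs_add htL Tile.north oN
  obtain ⟨hblack, hwhite, hgray⟩ := countColor_qTiles (k := k) (I := I) (oN := outN) (oE := outE)
    (D₁ := D₁) (D₂ := D₂) (fun X => southGlue k w h P (fun x y => outN (f x y)) X 0)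
    (fun Y => westGlue k w h P (fun x y => outE (f x y)) 0 Y)
  refine ⟨QGlue G₁, _, fun t ht t' ht' hne => ?_, hblack, hwhite.trans (by omega), hgray, ?_⟩
  · by_contra! hsw
    refine hne ((mem_qTiles.1 ht).directed ?_ (mem_qTiles.1 ht') hsw.1 hsw.2)
    rintro _ _ _ _ _ _ _ _ ⟨u, hu, rfl, rfl, rfl, rfl, rfl⟩ ⟨u', hu', rfl, rfl, rfl, hs, hw⟩
    have : u = u' := by
      by_contra huu
      rcases hD u (Finset.mem_filter.1 hu).1 u' (Finset.mem_filter.1 hu').1 huu with h | h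
      exacts [h hs.symm, h hw.symm]
    subst this
    exact ⟨rfl, rfl, rfl⟩
  · have hoN : ∀ x < w, ∀ y < h, outN (f x y) = if y = h - 1 then none else some (f x y).north :=
      fun x hx y hy => by simp only [outN, oN, hcol x hx y hy, hmemU x hx y hy]
    have hoE : ∀ x < w, ∀ y < h, outE (f x y) = if x = w - 1 then none else some (f x y).east :=
      fun x hx y hy => by simp only [outE, oE, hcol x hx y hy, hmemR x hx y hy]
    refine selfAssembles_of_isQTile k w h hw hh P _ _
      (fun x hx y hy => (Finset.mem_Icc.1 (hPk x hx y hy)).2) ?_ ?_ ?_ ?_ ?_ _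
      (fun t ht => mem_qTiles.2 ht)
    · intro x hx y hy hx1 hy1
      refine ⟨(f x y).south, (f x y).west, ?_, ?_, f x y, ?_, hcol x hx y hy, rfl, rfl, rfl, rfl⟩
      · have := hfN x hx (y - 1) (by omega)
        rw [Nat.sub_add_cancel hy1] at this
        rw [hoN x hx (y - 1) (by omega), if_neg (by omega), this]
      · have := hfE (x - 1) (by omega) y hy
        rw [Nat.sub_add_cancel hx1] at this
        rw [hoE (x - 1) (by omega) y hy, if_neg (by omega), this]
      · refine Finset.mem_filter.2 ⟨hfT x hx y hy, ?_⟩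
        rw [hcol x hx y hy, Finset.mem_union, hmemB x hx y hy, hmemL x hx y hy]
        omega
    · intro x hx y hy hy1
      refine Finset.mem_image.2 ⟨f x y, Finset.mem_filter.2 ⟨hfT x hx y hy, ?_⟩, ?_⟩
      · rw [hcol x hx y hy, hmemB x hx y hy]
        omega
      · rw [hcol x hx y hy]
    · intro x hx y hy hx1
      refine Finset.mem_image.2 ⟨f x y, Finset.mem_filter.2 ⟨hfT x hx y hy, ?_⟩, ?_⟩
      · rw [hcol x hx y hy, hmemL x hx y hy]
        omega
      · rw [hcol x hx y hy]
    · intro y hy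
      rw [hoE (w - 1) (by omega) y hy, if_pos rfl]
    · intro x hx
      rw [hoN x hx (h - 1) (by omega), if_pos rfl]
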